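/- arXiv:1903.00203 — 3 statements merged into one kernel-verified Lean document; each statement's English description precedes it below -/
import Mathlib

section
/- The set 𝕀 of intervals of the free group 𝔽 on two generators is closed under intersections: for all I, J ∈ 𝕀, the set I ∩ J belongs to 𝕀. -/
/-!
For a letter `s`, let `C_s` (`Cone s`) be the set of reduced words beginning with `s`. Two facts
describe how intervals meet cones.

* `IS_inter_cone`: either `I_n` misses `C_s`, or `I_n ∩ C_s = s I_k ∩ C_s`, for some
  `k < n` with `ℓ_k = s`.
* `translate_off_cone`: if `w ∈ C_s`, then either `w I_m ⊆ C_s`, or there is an `r` with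
  `ℓ_r = s⁻¹` such that `I_r ⊆ w I_m` and the two sets agree outside `C_s`.

After a translation the claim concerns `I_n ∩ w I_m`, and the proof is by induction on the reduced
word `w = s w'`. Take `k` and `r` from the two facts. If `n ≤ r`, the intersection is `I_n`. If
`r < n` and `I_n` misses `C_s`, or `k < r < n`, it is `I_r`. If `r < k`, then `I_r ⊆ s I_k ⊆ I_n`,
so the intersection equals `s I_k ∩ w I_m = s (I_k ∩ w' I_m)`, and the induction hypothesis
applies; the same reduction works when `w I_m ⊆ C_s`. The case `r = k` cannot occur, because
`ℓ_r = s⁻¹` and `ℓ_k = s`.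
-/

open Pointwise

/-- The free group on two generators. -/
abbrev F2 := FreeGroup (Fin 2)

/-- The first generator `a` of the free group. -/
def fa : F2 := FreeGroup.of 0

/-- The second generator `b` of the free group. -/
def fb : F2 := FreeGroup.of 1

/-- `ℓ_n ∈ {a, a⁻¹, b, b⁻¹}` defined according to `n % 4`. -/
def ell (n : ℕ) : F2 :=
  if n % 4 = 0 then fa else if n % 4 = 1 then fa⁻¹ else if n % 4 = 2 then fb else fb⁻¹

/-- The increasing chain of finite subsets `I_n ⊆ 𝔽`: `I_0 = {e}`,
`I_{n+1} = I_n ∪ ℓ_n · I_n`. -/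
def IS : ℕ → Set F2
  | 0 => {1}
  | n + 1 => IS n ∪ ell n • IS n

/-- The set `𝕀` of intervals of `𝔽`: all translates `w · I_n`, together with `∅`. -/
def Intervals : Set (Set F2) :=
  {S | S = ∅ ∨ ∃ (w : F2) (n : ℕ), S = w • IS n}

/-- Word length of an element of the free group: the length of its reduced word. -/
def len (w : F2) : ℕ := w.toWord.length

/-! ### Letters and cones -/

/-- A letter of the free group: `(i, true)` is the generator `i`, `(i, false)` its inverse. -/
abbrev Letter := Fin 2 × Bool

/-- The group element given by a letter. -/
def letterElt (s : Letter) : F2 := FreeGroup.mk [s]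

/-- The inverse letter. -/
def invLetter (s : Letter) : Letter := (s.1, !s.2)

/-- The set of reduced words whose first letter is `s`. -/
def Cone (s : Letter) : Set F2 := {x | x.toWord.head? = some s}

/-- `ell n` as a letter. -/
def ellLetter (n : ℕ) : Letter :=
  if n % 4 = 0 then (0, true) else if n % 4 = 1 then (0, false)
  else if n % 4 = 2 then (1, true) else (1, false)

lemma ell_eq (n : ℕ) : ell n = letterElt (ellLetter n) := by
  unfold ell ellLetter letterElt fa fb
  split_ifs <;> rfl

lemma invLetter_invLetter (s : Letter) : invLetter (invLetter s) = s := by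
  simp [invLetter]

lemma invLetter_ne (s : Letter) : invLetter s ≠ s := by
  intro h
  have := congrArg Prod.snd h
  simp [invLetter] at this

lemma letterElt_inv (s : Letter) : (letterElt s)⁻¹ = letterElt (invLetter s) := by
  simp [letterElt, invLetter, FreeGroup.inv_mk, FreeGroup.invRev]

lemma one_notMem_cone (s : Letter) : (1 : F2) ∉ Cone s := by
  simp [Cone]

lemma cone_unique {s t : Letter} {x : F2} (hs : x ∈ Cone s) (ht : x ∈ Cone t) : s = t := by
  simp only [Cone, Set.mem_ofPred_eq] at hs ht
  exact Option.some.inj (hs.symm.trans ht)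

lemma toWord_letterElt_mul (t : Letter) (y : F2) :
    (letterElt t * y).toWord = FreeGroup.reduce (t :: y.toWord) := by
  conv_lhs => rw [← FreeGroup.mk_toWord (x := y)]
  rw [letterElt, FreeGroup.mul_mk, FreeGroup.toWord_mk]
  rfl

/-- Left multiplication by `t` yields a word beginning with `t` exactly when nothing cancels. -/
lemma letterElt_mul_mem_cone (t : Letter) (y : F2) :
    letterElt t * y ∈ Cone t ↔ y ∉ Cone (invLetter t) := by
  simp only [Cone, Set.mem_ofPred_eq, toWord_letterElt_mul, FreeGroup.reduce.cons,
    FreeGroup.reduce_toWord]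
  have hred : FreeGroup.IsReduced y.toWord := FreeGroup.isReduced_toWord
  cases h : y.toWord with
  | nil => simp
  | cons u L =>
    rw [h] at hred
    by_cases hc : t.1 = u.1 ∧ t.2 = !u.2
    · have hu : u = invLetter t := by
        ext <;> simp [invLetter, hc.1, hc.2]
      simp only [hc, and_self, if_true, List.head?_cons, hu, not_true, iff_false]
      cases L with
      | nil => simp
      | cons v L =>
        -- The word `t⁻¹ t …` is not reduced.
        simp only [List.head?_cons, Option.some.injEq]
        rintro rfl
        rw [FreeGroup.isReduced_cons_cons] at hred
        have := hred.1 hc.1.symm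
        simp [hc.2] at this
    · have hu : u ≠ invLetter t := by
        rintro rfl
        simp [invLetter] at hc
      simp [hc, hu]

lemma mem_cone_of_mul_mem {s t : Letter} {y : F2} (h : letterElt t * y ∈ Cone s)
    (hst : s ≠ t) : y ∈ Cone (invLetter t) := by
  by_contra hy
  exact hst (cone_unique h ((letterElt_mul_mem_cone t y).2 hy))

/-- Induction on reduced words by adding a letter on the left. -/
lemma reduced_induction {P : F2 → Prop} (one : P 1)
    (cons : ∀ s w, w ∉ Cone (invLetter s) → P w → P (letterElt s * w)) (w : F2) : P w := by
  obtain ⟨n, hn⟩ : ∃ n, w.toWord.length = n := ⟨_, rfl⟩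
  induction n generalizing w with
  | zero =>
    have : w = 1 := FreeGroup.toWord_eq_nil_iff.1 (List.length_eq_zero_iff.1 hn)
    rwa [this]
  | succ n ih =>
    cases h : w.toWord with
    | nil => simp [h] at hn
    | cons s L =>
      have hred : FreeGroup.IsReduced (s :: L) := h ▸ FreeGroup.isReduced_toWord
      have hL : FreeGroup.IsReduced L := hred.infix (List.suffix_cons s L).isInfix
      have hw : w = letterElt s * FreeGroup.mk L := by
        rw [letterElt, FreeGroup.mul_mk, ← FreeGroup.mk_toWord (x := w), h]
        rfl
      have hLw : (FreeGroup.mk L).toWord = L := by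
        rw [FreeGroup.toWord_mk, hL.reduce_eq]
      rw [hw]
      refine cons s _ ?_ (ih _ ?_)
      · rw [← letterElt_mul_mem_cone, ← hw]
        simp [Cone, h]
      · rw [hLw]
        simpa [h] using hn

/-! ### The sets `I_n` and cones -/

lemma IS_mono {m n : ℕ} (h : m ≤ n) : IS m ⊆ IS n :=
  monotone_nat_of_le_succ (fun _ _ hx => Or.inl hx) h

lemma mem_IS_succ {n : ℕ} {x : F2} :
    x ∈ IS (n + 1) ↔ x ∈ IS n ∨ ∃ y ∈ IS n, letterElt (ellLetter n) * y = x := by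
  rw [← ell_eq]
  exact Iff.rfl

/-- `ℓ_k I_k ⊆ I_n` for `k < n`. -/
lemma letterElt_mul_mem_IS {k n : ℕ} {s : Letter} (h : k < n) (hs : ellLetter k = s) {y : F2}
    (hy : y ∈ IS k) : letterElt s * y ∈ IS n :=
  IS_mono h (mem_IS_succ.2 (Or.inr ⟨y, hy, by rw [hs]⟩))

/-- `I_n` is closed under deleting the first letter of a reduced word. -/
lemma tail_mem_IS (n : ℕ) : ∀ (s : Letter) (x : F2), x ∈ IS n → x ∈ Cone s →
    letterElt (invLetter s) * x ∈ IS n := by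
  induction n with
  | zero =>
    intro s x hx hs
    rw [show x = 1 from hx] at hs
    exact absurd hs (one_notMem_cone s)
  | succ n ih =>
    intro s x hx hs
    rcases mem_IS_succ.1 hx with hx | ⟨y, hy, rfl⟩
    · exact IS_mono n.le_succ (ih s x hx hs)
    · by_cases h : s = ellLetter n
      · rw [← h, ← letterElt_inv, inv_mul_cancel_left]
        exact IS_mono n.le_succ hy
      · -- Here `ℓ_n` cancels against `y`, so `ℓ_n y` is a tail of `y`.
        have h1 := ih _ y hy (mem_cone_of_mul_mem hs h)
        rw [invLetter_invLetter] at h1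
        exact IS_mono n.le_succ (ih s _ h1 hs)

lemma IS_inter_cone (s : Letter) (n : ℕ) :
    (∀ x ∈ IS n, x ∉ Cone s) ∨
      ∃ k < n, ellLetter k = s ∧ ∀ x ∈ IS n, x ∈ Cone s → x ∈ letterElt s • IS k := by
  induction n with
  | zero =>
    left
    intro x hx
    rw [show x = 1 from hx]
    exact one_notMem_cone s
  | succ n ih =>
    by_cases h : ellLetter n = s
    · refine Or.inr ⟨n, n.lt_succ_self, h, fun x hx hs => ?_⟩
      rw [Set.mem_smul_set_iff_inv_smul_mem, letterElt_inv, smul_eq_mul]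
      rcases mem_IS_succ.1 hx with hx | ⟨y, hy, rfl⟩
      · exact tail_mem_IS n s x hx hs
      · rwa [h, ← letterElt_inv, inv_mul_cancel_left]
    · have key : ∀ x ∈ IS (n + 1), x ∈ Cone s → x ∈ IS n := by
        intro x hx hs
        rcases mem_IS_succ.1 hx with hx | ⟨y, hy, rfl⟩
        · exact hx
        · have h1 := tail_mem_IS n _ y hy (mem_cone_of_mul_mem hs (Ne.symm h))
          rwa [invLetter_invLetter] at h1
      rcases ih with ih | ⟨k, hk, hks, ih⟩
      · exact Or.inl fun x hx hs => ih x (key x hx hs) hs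
      · exact Or.inr ⟨k, hk.trans n.lt_succ_self, hks, fun x hx hs => ih x (key x hx hs) hs⟩

/-- For `w` outside `C_t`, the part of `w I_m` inside `C_t` is empty or is that of some
`I_r ⊆ w I_m`. -/
lemma translate_inter_cone (m : ℕ) (w : F2) : ∀ t : Letter, w ∉ Cone t →
    (∀ x ∈ w • IS m, x ∉ Cone t) ∨
      ∃ r, IS r ⊆ w • IS m ∧ ∀ x ∈ w • IS m, x ∈ Cone t → x ∈ IS r := by
  induction w using reduced_induction with
  | one =>
    intro t _
    exact Or.inr ⟨m, by simp, fun x hx _ => by simpa using hx⟩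
  | cons s w hw ih =>
    intro t ht
    have hst : t ≠ s := by
      rintro rfl
      exact ht ((letterElt_mul_mem_cone t w).2 hw)
    -- An element of `s w I_m` in `C_t` has the form `s y` with `y ∈ w I_m ∩ C_{s⁻¹}`.
    have key : ∀ x ∈ (letterElt s * w) • IS m, x ∈ Cone t →
        ∃ y ∈ w • IS m, y ∈ Cone (invLetter s) ∧ x = letterElt s * y := by
      intro x hx hxt
      rw [mul_smul] at hx
      obtain ⟨y, hy, rfl⟩ := hx
      exact ⟨y, hy, mem_cone_of_mul_mem hxt hst, rfl⟩
    rcases ih _ hw with ih | ⟨r, hr, ih⟩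
    · left
      intro x hx hxt
      obtain ⟨y, hy, hyc, -⟩ := key x hx hxt
      exact ih y hy hyc
    · rcases IS_inter_cone (invLetter s) r with hB | ⟨k, hk, hks, hB⟩
      · left
        intro x hx hxt
        obtain ⟨y, hy, hyc, -⟩ := key x hx hxt
        exact hB y (ih y hy hyc) hyc
      · refine Or.inr ⟨k, fun x hx => ?_, fun x hx hxt => ?_⟩
        · rw [mul_smul, Set.mem_smul_set_iff_inv_smul_mem, letterElt_inv]
          exact hr (letterElt_mul_mem_IS hk hks hx)
        · obtain ⟨y, hy, hyc, rfl⟩ := key x hx hxt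
          have := hB y (ih y hy hyc) hyc
          rwa [Set.mem_smul_set_iff_inv_smul_mem, letterElt_inv, invLetter_invLetter] at this

lemma translate_off_cone (m : ℕ) (s : Letter) (w : F2) (hw : w ∉ Cone (invLetter s)) :
    (∀ x ∈ (letterElt s * w) • IS m, x ∈ Cone s) ∨
      ∃ r, ellLetter r = invLetter s ∧ IS r ⊆ (letterElt s * w) • IS m ∧
        ∀ x ∈ (letterElt s * w) • IS m, x ∉ Cone s → x ∈ IS r := by
  rcases translate_inter_cone m w _ hw with h | ⟨q, hq, h⟩
  · left
    intro x hx
    rw [mul_smul] at hx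
    obtain ⟨y, hy, rfl⟩ := hx
    exact (letterElt_mul_mem_cone s y).2 (h y hy)
  · rcases IS_inter_cone (invLetter s) q with hB | ⟨k, hk, hks, hB⟩
    · left
      intro x hx
      rw [mul_smul] at hx
      obtain ⟨y, hy, rfl⟩ := hx
      exact (letterElt_mul_mem_cone s y).2 fun hc => hB y (h y hy hc) hc
    · refine Or.inr ⟨k, hks, fun x hx => ?_, fun x hx hxs => ?_⟩
      · rw [mul_smul, Set.mem_smul_set_iff_inv_smul_mem, letterElt_inv]
        exact hq (letterElt_mul_mem_IS hk hks hx)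
      · rw [mul_smul] at hx
        obtain ⟨y, hy, rfl⟩ := hx
        have hc : y ∈ Cone (invLetter s) := by
          by_contra hc
          exact hxs ((letterElt_mul_mem_cone s y).2 hc)
        have := hB y (h y hy hc) hc
        rwa [Set.mem_smul_set_iff_inv_smul_mem, letterElt_inv, invLetter_invLetter] at this

/-! ### Intersections -/

lemma smul_mem_Intervals (g : F2) {S : Set F2} (hS : S ∈ Intervals) : g • S ∈ Intervals := by
  rcases hS with rfl | ⟨w, n, rfl⟩
  · exact Or.inl (Set.smul_set_empty)
  · exact Or.inr ⟨g * w, n, (mul_smul _ _ _).symm⟩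

lemma IS_mem_Intervals (n : ℕ) : IS n ∈ Intervals :=
  Or.inr ⟨1, n, (one_smul _ _).symm⟩

lemma IS_inter_translate (m : ℕ) (w : F2) : ∀ n, IS n ∩ w • IS m ∈ Intervals := by
  induction w using reduced_induction with
  | one =>
    intro n
    rw [one_smul]
    rcases le_total n m with h | h
    · rw [Set.inter_eq_left.2 (IS_mono h)]
      exact IS_mem_Intervals n
    · rw [Set.inter_eq_right.2 (IS_mono h)]
      exact IS_mem_Intervals m
  | cons s w hw ih =>
    intro n
    -- The inductive step applies once the intersection is known to lie in `s I_k`.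
    have reduce : ∀ k < n, ellLetter k = s →
        (∀ x ∈ IS n, x ∈ (letterElt s * w) • IS m → x ∈ letterElt s • IS k) →
        IS n ∩ (letterElt s * w) • IS m ∈ Intervals := by
      intro k hk hks h
      have heq : IS n ∩ (letterElt s * w) • IS m = letterElt s • (IS k ∩ w • IS m) := by
        rw [Set.smul_set_inter, ← mul_smul]
        refine Set.Subset.antisymm (fun x hx => ⟨h x hx.1 hx.2, hx.2⟩) ?_
        rintro _ ⟨⟨y, hy, rfl⟩, hx⟩
        exact ⟨letterElt_mul_mem_IS hk hks hy, hx⟩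
      rw [heq]
      exact smul_mem_Intervals _ (ih k)
    rcases translate_off_cone m s w hw with hA | ⟨r, hrs, hr, hA⟩
    · rcases IS_inter_cone s n with hB | ⟨k, hk, hks, hB⟩
      · left
        exact Set.eq_empty_of_forall_notMem fun x hx => hB x hx.1 (hA x hx.2)
      · exact reduce k hk hks fun x hx hx' => hB x hx (hA x hx')
    · rcases le_or_gt n r with hnr | hrn
      · rw [Set.inter_eq_left.2 ((IS_mono hnr).trans hr)]
        exact IS_mem_Intervals n
      · have eq_r (h : ∀ x ∈ IS n, x ∈ Cone s → x ∈ IS r) :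
            IS n ∩ (letterElt s * w) • IS m ∈ Intervals := by
          have heq : IS n ∩ (letterElt s * w) • IS m = IS r := by
            refine Set.Subset.antisymm (fun x hx => ?_)
              fun x hx => ⟨IS_mono hrn.le hx, hr hx⟩
            by_cases hxs : x ∈ Cone s
            · exact h x hx.1 hxs
            · exact hA x hx.2 hxs
          rw [heq]
          exact IS_mem_Intervals r
        rcases IS_inter_cone s n with hB | ⟨k, hk, hks, hB⟩
        · exact eq_r fun x hx hxs => absurd hxs (hB x hx)
        · rcases lt_trichotomy r k with hrk | rfl | hkr
          · refine reduce k hk hks fun x hx hx' => ?_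
            by_cases hxs : x ∈ Cone s
            · exact hB x hx hxs
            · rw [Set.mem_smul_set_iff_inv_smul_mem, letterElt_inv]
              exact letterElt_mul_mem_IS hrk hrs (hA x hx' hxs)
          · exact absurd (hrs.symm.trans hks) (invLetter_ne s)
          · refine eq_r fun x hx hxs => ?_
            obtain ⟨y, hy, rfl⟩ := hB x hx hxs
            exact letterElt_mul_mem_IS hkr hks hy

/-- The set `𝕀` of intervals of the free group on two generators is closed under
intersections. -/
theorem intervals_inter_mem (I J : Set F2) (hI : I ∈ Intervals) (hJ : J ∈ Intervals) :
    I ∩ J ∈ Intervals := by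
  rcases hI with rfl | ⟨v, n, rfl⟩
  · exact Or.inl (Set.empty_inter _)
  rcases hJ with rfl | ⟨w, m, rfl⟩
  · exact Or.inl (Set.inter_empty _)
  have h := smul_mem_Intervals v (IS_inter_translate m (v⁻¹ * w) n)
  rwa [Set.smul_set_inter, ← mul_smul, mul_inv_cancel_left] at h
end

section
/- For every n ∈ ℕ: if n is even, then I_n ∩ ℓ_n·I_n = I_{n−3}, and if n is odd, then I_n ∩ ℓ_n·I_n = I_{n−1}, with the convention that I_{−3} = I_{−1} = ∅. -/
/-!
Put `J_k = I_{2k}` and let `x` be `a` or `b` according to the parity of `k`. Then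
`J_{k+1} = J_k ∪ x J_k ∪ x⁻¹ J_k` and `I_{2k+1} = J_k ∪ x J_k`, so an element of `J_k` is a product
of `k` factors, read from the left as slots `k-1, …, 0`, in which slots of even index hold a power
`a^{0,±1}` and slots of odd index a power `b^{0,±1}`. The key fact `mem_IS_two_mul` is that
cancellations between slots gain nothing: `g ∈ J_k` if and only if the reduced word of `g` fits into
the slots greedily (`Fits`).

Multiplying by a letter either prepends it to the reduced word or removes the first letter. Since
`Fits k` is stable under removing the first letter, `x J_k ∩ x⁻¹ J_k ⊆ J_k`, which gives the odd
case. If `g` and `x⁻¹ g` both lie in `J_k`, the longer of the two words starts with a letter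
`x^{±1}`; that letter has to skip slot `k-1` and fill slot `k-2`, so the shorter word fits into
`k-2` slots, that is, `g ∈ J_{k-2} ∪ x J_{k-2} = I_{2k-3}`. For `k < 2` there is no slot for that
letter, so the intersection is empty.
-/

open Pointwise

/-! ### Greedy words -/

/-- The generator index used in passing from `I_{2k}` to `I_{2k+2}`: `a` for even `k`, `b` for
odd `k`. -/
def genIdx (k : ℕ) : Fin 2 := if k % 2 = 0 then 0 else 1

/-- The word `w` can be read off the slots `k-1, …, 0`, where slot `j` may be skipped or filled with
the generator of index `genIdx j` or its inverse, and every letter takes the first slot available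
to it. For reduced `w` this means that `w` represents an element of `I_{2k}`, by
`mem_IS_two_mul`. -/
def Fits : ℕ → List (Fin 2 × Bool) → Prop
  | 0, w => w = []
  | _ + 1, [] => True
  | k + 1, c :: w => if c.1 = genIdx k then Fits k w else Fits k (c :: w)

lemma genIdx_add_two (k : ℕ) : genIdx (k + 2) = genIdx k := by
  simp [genIdx]

lemma genIdx_succ_ne (k : ℕ) : genIdx k ≠ genIdx (k + 1) := by
  unfold genIdx
  rcases Nat.mod_two_eq_zero_or_one k with h | h
  · have h' : (k + 1) % 2 = 1 := by omega
    simp [h, h']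
  · have h' : (k + 1) % 2 = 0 := by omega
    simp [h, h']

lemma eq_genIdx_succ {i : Fin 2} {k : ℕ} (h : i ≠ genIdx k) : i = genIdx (k + 1) := by
  have := genIdx_succ_ne k
  omega

lemma fits_nil (k : ℕ) : Fits k [] := by
  cases k <;> simp [Fits]

lemma fits_cons_of_eq {k : ℕ} {c : Fin 2 × Bool} {w : List (Fin 2 × Bool)}
    (h : c.1 = genIdx k) : Fits (k + 1) (c :: w) ↔ Fits k w := by
  simp [Fits, h]

lemma fits_cons_of_ne {k : ℕ} {c : Fin 2 × Bool} {w : List (Fin 2 × Bool)}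
    (h : c.1 ≠ genIdx k) : Fits (k + 1) (c :: w) ↔ Fits k (c :: w) := by
  simp [Fits, h]

/-- Monotonicity in the number of slots and stability under dropping the first letter. Each needs
the other at the previous stage, so they are proved together. -/
lemma fits_succ_and_tail (k : ℕ) :
    (∀ w, Fits k w → Fits (k + 1) w) ∧ ∀ c w, Fits k (c :: w) → Fits k w := by
  induction k with
  | zero =>
    constructor
    · rintro w rfl
      exact fits_nil 1
    · intro c w h
      simp [Fits] at h
  | succ k ih =>
    obtain ⟨hs, ht⟩ := ih
    constructor
    · rintro (_ | ⟨c, w⟩) h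
      · exact fits_nil _
      by_cases hc : c.1 = genIdx k
      · exact (fits_cons_of_ne (hc ▸ genIdx_succ_ne k)).2 h
      · exact (fits_cons_of_eq (eq_genIdx_succ hc)).2
          (hs _ (ht _ _ ((fits_cons_of_ne hc).1 h)))
    · intro c w h
      by_cases hc : c.1 = genIdx k
      · exact hs _ ((fits_cons_of_eq hc).1 h)
      · exact hs _ (ht _ _ ((fits_cons_of_ne hc).1 h))

lemma Fits.succ {k : ℕ} {w : List (Fin 2 × Bool)} (h : Fits k w) : Fits (k + 1) w :=
  (fits_succ_and_tail k).1 w h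

lemma Fits.tail {k : ℕ} {c : Fin 2 × Bool} {w : List (Fin 2 × Bool)}
    (h : Fits k (c :: w)) : Fits k w :=
  (fits_succ_and_tail k).2 c w h

/-- A letter of index `genIdx k` cannot use slot `k-1`, so it takes slot `k-2`. -/
lemma fits_add_two_cons {k : ℕ} {c : Fin 2 × Bool} {w : List (Fin 2 × Bool)}
    (h : c.1 = genIdx k) : Fits (k + 2) (c :: w) ↔ Fits k w := by
  rw [fits_cons_of_ne (h ▸ genIdx_succ_ne k), fits_cons_of_eq h]

/-! ### Letters acting on reduced words -/

/-- The generator of index `i` if `b` is true, its inverse otherwise. -/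
def letter (i : Fin 2) (b : Bool) : F2 := FreeGroup.mk [(i, b)]

lemma letter_inv (i : Fin 2) (b : Bool) : (letter i b)⁻¹ = letter i (!b) := by
  simp [letter, FreeGroup.inv_mk, FreeGroup.invRev]

lemma toWord_letter_mul (i : Fin 2) (b : Bool) (g : F2) :
    (letter i b * g).toWord = (i, b) :: g.toWord ∨
      g.toWord = (i, !b) :: (letter i b * g).toWord := by
  have h : (letter i b * g).toWord = FreeGroup.reduce ((i, b) :: g.toWord) := by
    conv_lhs => rw [← FreeGroup.mk_toWord (x := g)]
    simp [letter, FreeGroup.mul_mk, FreeGroup.toWord_mk]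
  rw [h, FreeGroup.reduce.cons, FreeGroup.reduce_toWord]
  rcases g.toWord with _ | ⟨⟨j, d⟩, w⟩
  · simp
  · by_cases hc : i = j ∧ b = !d
    · obtain ⟨rfl, rfl⟩ := hc
      simp
    · left
      simp only [hc, if_false]

/-! ### The sets `I_{2k}` -/

lemma ell_two_mul (k : ℕ) : ell (2 * k) = letter (genIdx k) true := by
  unfold ell genIdx
  rcases Nat.mod_two_eq_zero_or_one k with h | h
  · have h' : 2 * k % 4 = 0 := by omega
    simp [h, h', letter, fa, FreeGroup.of]
  · have h' : 2 * k % 4 = 2 := by omega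
    simp [h, h', letter, fb, FreeGroup.of]

lemma ell_two_mul_add_one (k : ℕ) : ell (2 * k + 1) = letter (genIdx k) false := by
  have h : letter (genIdx k) false = (letter (genIdx k) true)⁻¹ := by simp [letter_inv]
  rw [h, ← ell_two_mul]
  unfold ell
  rcases Nat.mod_two_eq_zero_or_one k with h | h
  · have h₁ : 2 * k % 4 = 0 := by omega
    have h₂ : (2 * k + 1) % 4 = 1 := by omega
    simp [h₁, h₂]
  · have h₁ : 2 * k % 4 = 2 := by omega
    have h₂ : (2 * k + 1) % 4 = 3 := by omega
    simp [h₁, h₂]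

lemma mem_letter_smul {i : Fin 2} {b : Bool} {S : Set F2} {g : F2} :
    g ∈ letter i b • S ↔ letter i (!b) * g ∈ S := by
  rw [Set.mem_smul_set_iff_inv_smul_mem, letter_inv, smul_eq_mul]

lemma letter_mul_letter_not (i : Fin 2) (b : Bool) (g : F2) :
    letter i b * (letter i (!b) * g) = g := by
  rw [← letter_inv, mul_inv_cancel_left]

lemma mem_IS_odd {k : ℕ} {g : F2} :
    g ∈ IS (2 * k + 1) ↔ g ∈ IS (2 * k) ∨ letter (genIdx k) false * g ∈ IS (2 * k) := by
  rw [IS, Set.mem_union, ell_two_mul, mem_letter_smul, Bool.not_true]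

lemma mem_IS_even_succ {k : ℕ} {g : F2} :
    g ∈ IS (2 * (k + 1)) ↔ g ∈ IS (2 * k) ∨ ∃ b, letter (genIdx k) b * g ∈ IS (2 * k) := by
  have h := letter_mul_letter_not (genIdx k) false g
  rw [Bool.not_false] at h
  rw [show 2 * (k + 1) = 2 * k + 1 + 1 by ring, IS, Set.mem_union, ell_two_mul_add_one,
    mem_letter_smul, Bool.not_false, mem_IS_odd, mem_IS_odd, h, Bool.exists_bool]
  tauto

/-- Cancellations between slots gain nothing: `I_{2k}` consists of the elements whose reduced word
fits greedily into `k` slots. -/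
lemma mem_IS_two_mul {k : ℕ} {g : F2} : g ∈ IS (2 * k) ↔ Fits k g.toWord := by
  induction k generalizing g with
  | zero => simp [IS, Fits]
  | succ k ih =>
    simp only [mem_IS_even_succ, ih]
    constructor
    · rintro (h | ⟨b, h⟩)
      · exact h.succ
      · rcases toWord_letter_mul (genIdx k) b g with hw | hw
        · rw [hw] at h
          exact h.tail.succ
        · rw [hw]
          exact (fits_cons_of_eq rfl).2 h
    · intro h
      rcases hg : g.toWord with _ | ⟨⟨i, b⟩, w⟩
      · exact Or.inl (fits_nil k)
      rw [hg] at h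
      by_cases hc : i = genIdx k
      · subst hc
        refine Or.inr ⟨!b, ?_⟩
        rcases toWord_letter_mul (genIdx k) (!b) g with hw | hw
        · -- The word `(i, !b) :: (i, b) :: w` is not reduced.
          exfalso
          have h' := toWord_letter_mul (genIdx k) b (letter (genIdx k) (!b) * g)
          rw [letter_mul_letter_not, hw, hg] at h'
          rcases h' with h' | h'
          · have := congrArg List.length h'
            simp at this
          · have hr := FreeGroup.isReduced_toWord
              (x := letter (genIdx k) (!b) * g)
            rw [hw, hg] at hr
            simp [FreeGroup.IsReduced] at hr
        · rw [hg] at hw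
          obtain ⟨-, hw⟩ := List.cons.inj hw
          rw [← hw]
          exact (fits_cons_of_eq rfl).1 h
      · exact Or.inl ((fits_cons_of_ne hc).1 h)

lemma IS_two_mul_mono {k : ℕ} : IS (2 * k) ⊆ IS (2 * (k + 1)) := fun _ h =>
  mem_IS_even_succ.2 (Or.inl h)

/-- Multiplying by both `x` and `x⁻¹` cannot shorten a reduced word twice, so `I_{2k}` is convex
along the cosets of each generator. -/
lemma mem_IS_of_both {k : ℕ} {i : Fin 2} {g : F2} (h₁ : letter i true * g ∈ IS (2 * k))
    (h₂ : letter i false * g ∈ IS (2 * k)) : g ∈ IS (2 * k) := by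
  rw [mem_IS_two_mul] at *
  rcases toWord_letter_mul i true g with hw | hw
  · rw [hw] at h₁
    exact h₁.tail
  rcases toWord_letter_mul i false g with hw' | hw'
  · rw [hw'] at h₂
    exact h₂.tail
  · rw [hw] at hw'
    simp at hw'

lemma IS_inter_odd (k : ℕ) :
    IS (2 * k + 1) ∩ ell (2 * k + 1) • IS (2 * k + 1) = IS (2 * k) := by
  ext g
  have h := letter_mul_letter_not (genIdx k) false g
  rw [Bool.not_false] at h
  rw [Set.mem_inter_iff, ell_two_mul_add_one, mem_letter_smul, Bool.not_false, mem_IS_odd,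
    mem_IS_odd, h]
  have := mem_IS_of_both (k := k) (i := genIdx k) (g := g)
  tauto

/-- The reduced word of one of `g`, `x⁻¹ g` is that of the other with a letter `x^{±1}` prepended, and
this longer word fits. -/
lemma exists_cons (i : Fin 2) {k : ℕ} {g : F2} (h₁ : g ∈ IS (2 * k))
    (h₂ : letter i false * g ∈ IS (2 * k)) :
    Fits k ((i, false) :: g.toWord) ∨ Fits k ((i, true) :: (letter i false * g).toWord) := by
  rw [mem_IS_two_mul] at *
  rcases toWord_letter_mul i false g with hw | hw
  · left
    rwa [← hw]
  · right
    rw [Bool.not_false] at hw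
    rwa [← hw]

lemma IS_inter_even (k : ℕ) :
    IS (2 * (k + 2)) ∩ ell (2 * (k + 2)) • IS (2 * (k + 2)) = IS (2 * k + 1) := by
  ext g
  rw [Set.mem_inter_iff, ell_two_mul, mem_letter_smul, Bool.not_true, mem_IS_odd, genIdx_add_two]
  constructor
  · rintro ⟨h₁, h₂⟩
    rw [mem_IS_two_mul, mem_IS_two_mul]
    exact (exists_cons _ h₁ h₂).imp (fits_add_two_cons rfl).1 (fits_add_two_cons rfl).1
  · have h := letter_mul_letter_not (genIdx k) true g
    rw [Bool.not_true] at h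
    rintro (hg | hg)
    · exact ⟨IS_two_mul_mono (IS_two_mul_mono hg), IS_two_mul_mono
        (mem_IS_even_succ.2 (Or.inr ⟨true, by rwa [h]⟩))⟩
    · exact ⟨IS_two_mul_mono (mem_IS_even_succ.2 (Or.inr ⟨false, hg⟩)),
        IS_two_mul_mono (IS_two_mul_mono hg)⟩

lemma IS_inter_small {k : ℕ} (hk : k < 2) : IS (2 * k) ∩ ell (2 * k) • IS (2 * k) = ∅ := by
  ext g
  rw [Set.mem_inter_iff, ell_two_mul, mem_letter_smul, Bool.not_true, Set.mem_empty_iff_false,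
    iff_false]
  rintro ⟨h₁, h₂⟩
  have h := exists_cons _ h₁ h₂
  interval_cases k <;> simp [Fits, genIdx] at h

/-- If `n` is even then `I_n ∩ ℓ_n·I_n = I_{n-3}`, and if `n` is odd then
`I_n ∩ ℓ_n·I_n = I_{n-1}`, with the convention `I_{-3} = I_{-1} = ∅`. -/
theorem IS_inter_ell_smul (n : ℕ) :
    (Even n → IS n ∩ ell n • IS n = if 3 ≤ n then IS (n - 3) else (∅ : Set F2)) ∧
    (Odd n → IS n ∩ ell n • IS n = IS (n - 1)) := by
  constructor
  · rintro ⟨k, rfl⟩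
    rw [← two_mul]
    by_cases hk : k < 2
    · rw [IS_inter_small hk, if_neg (by omega)]
    · obtain ⟨j, rfl⟩ := Nat.exists_eq_add_of_le' (not_lt.1 hk)
      rw [IS_inter_even, if_pos (by omega), show 2 * (j + 2) - 3 = 2 * j + 1 by omega]
  · rintro ⟨k, rfl⟩
    rw [IS_inter_odd, Nat.add_sub_cancel]
end

section
/- Every proper subinterval of I_{n+1} is contained in I_n or in ℓ_n·I_n; that is, for every n ∈ ℕ and every J ∈ 𝕀 with J ⊆ I_{n+1} and J ≠ I_{n+1}, one has J ⊆ I_n or J ⊆ ℓ_n·I_n. -/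
/-!
The argument uses only that each `ℓ_n` is a letter. By induction, every `I_n` is closed under
passing to suffixes of reduced words (`IS_suffix`). The other ingredient is a cancellation fact
(`head_or_suffix`): the reduced word of `w * v` either begins with the first letter of `w`, or is
a suffix of the reduced word of `v`.

Let `J = w • I_m ⊆ I_{n+1}`. If `n + 1 ≤ m`, then `I_{n+1} ⊆ I_m`, and comparing cardinalities
gives `J = I_{n+1}`, which is excluded. So `m ≤ n`, hence `I_m ⊆ I_n`.
* If `w` does not begin with `ℓ_n`, an element `w * v` of `J` outside `I_n` would have to begin
  with `ℓ_n`; then it is a suffix of `v ∈ I_m`, so it lies in `I_n` after all.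
  Thus `J ⊆ I_n`.
* If `w = ℓ_n * u` is reduced, then `u * v` either begins with `ℓ_n⁻¹`, in which case it is a
  suffix of `v`, or it is a suffix of the reduced word of `w * v ∈ I_{n+1}`. Either way
  `u * v ∈ I_n`, and `J ⊆ ℓ_n • I_n`.
-/

open Pointwise

lemma exists_ell_eq_mk (n : ℕ) : ∃ p : Fin 2 × Bool, ell n = FreeGroup.mk [p] := by
  unfold ell fa fb
  split_ifs
  exacts [⟨(0, true), rfl⟩, ⟨(0, false), rfl⟩, ⟨(1, true), rfl⟩, ⟨(1, false), rfl⟩]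

/-- Multiplying by a letter on the left either prepends it to the reduced word, or cancels the
first letter. -/
lemma toWord_letter_mul_s7 (p : Fin 2 × Bool) (z : F2) :
    (FreeGroup.mk [p] * z).toWord = p :: z.toWord ∨
      z.toWord = (p.1, !p.2) :: (FreeGroup.mk [p] * z).toWord := by
  have h : (FreeGroup.mk [p] * z).toWord = FreeGroup.reduce (p :: z.toWord) := by
    conv_lhs => rw [← FreeGroup.mk_toWord (x := z)]
    rw [FreeGroup.mul_mk, FreeGroup.toWord_mk]
    rfl
  rw [h, FreeGroup.reduce.cons, FreeGroup.reduce_toWord]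
  rcases hz : z.toWord with _ | ⟨q, t⟩
  · simp
  · obtain ⟨i, b⟩ := p
    obtain ⟨j, c⟩ := q
    by_cases hc : i = j ∧ b = !c
    · right
      obtain ⟨rfl, rfl⟩ := hc
      simp
    · left
      simp [hc]

/-- The reduced word of a product `w * v`, with `L` the reduced word of `w`, begins with the first
letter of `w` unless `w` is absorbed completely by cancellation into `v`. -/
lemma head_or_suffix (v : F2) (L : List (Fin 2 × Bool)) (hL : FreeGroup.IsReduced L) :
    (∃ q t t₁, L = q :: t ∧ (FreeGroup.mk L * v).toWord = q :: t₁) ∨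
      (FreeGroup.mk L * v).toWord <:+ v.toWord := by
  induction L with
  | nil =>
    right
    rw [← FreeGroup.one_eq_mk, one_mul]
  | cons p L ih =>
    have hmul : (FreeGroup.mk (p :: L) * v : F2) =
        FreeGroup.mk [p] * (FreeGroup.mk L * v) := by
      rw [← mul_assoc, FreeGroup.mul_mk]
      rfl
    rw [hmul]
    rcases toWord_letter_mul_s7 p (FreeGroup.mk L * v) with h | h
    · exact Or.inl ⟨p, L, _, rfl, h⟩
    · right
      have hs : (FreeGroup.mk [p] * (FreeGroup.mk L * v)).toWord <:+
          (FreeGroup.mk L * v).toWord := by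
        conv_rhs => rw [h]
        exact List.suffix_cons _ _
      rcases ih (hL.infix (List.suffix_cons p L).isInfix) with ⟨q, t, t₁, rfl, hh⟩ | hh
      · exfalso
        -- Here `L` begins with the inverse of `p`, so `p :: L` is not reduced.
        rw [hh] at h
        obtain ⟨rfl, -⟩ := List.cons.inj h
        have := (FreeGroup.isReduced_cons_cons.1 hL).1
        simp at this
      · exact hs.trans hh

lemma IS_suffix (n : ℕ) : ∀ x ∈ IS n, ∀ y : F2, y.toWord <:+ x.toWord → y ∈ IS n := by
  induction n with
  | zero =>
    intro x hx y hy
    have hx : x = 1 := hx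
    subst hx
    rw [FreeGroup.toWord_one, List.suffix_nil, FreeGroup.toWord_eq_nil_iff] at hy
    exact hy
  | succ n ih =>
    rintro x (hx | ⟨z, hz, rfl⟩) y hy
    · exact Or.inl (ih x hx y hy)
    · obtain ⟨p, hp⟩ := exists_ell_eq_mk n
      simp only [hp, smul_eq_mul] at hy
      rcases toWord_letter_mul_s7 p z with h | h
      · rw [h, List.suffix_cons_iff] at hy
        rcases hy with hy | hy
        · right
          refine ⟨z, hz, ?_⟩
          simp only [hp, smul_eq_mul]
          exact FreeGroup.toWord_injective (h.trans hy.symm)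
        · exact Or.inl (ih z hz y hy)
      · refine Or.inl (ih z hz y (hy.trans ?_))
        conv_rhs => rw [h]
        exact List.suffix_cons _ _

lemma IS_mono_s7 : Monotone IS :=
  monotone_nat_of_le_succ fun _ => Set.subset_union_left

lemma IS_finite (n : ℕ) : (IS n).Finite := by
  induction n with
  | zero => exact Set.finite_singleton _
  | succ n ih => exact ih.union ih.smul_set

/-- Every proper subinterval of `I_{n+1}` is contained in `I_n` or in `ℓ_n·I_n`. -/
theorem subinterval_of_succ (n : ℕ) (J : Set F2) (hJ : J ∈ Intervals)
    (hsub : J ⊆ IS (n + 1)) (hne : J ≠ IS (n + 1)) :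
    J ⊆ IS n ∨ J ⊆ ell n • IS n := by
  rcases hJ with rfl | ⟨w, m, rfl⟩
  · exact Or.inl (Set.empty_subset _)
  have hmn : m ≤ n := by
    by_contra hlt
    refine hne (Set.eq_of_subset_of_ncard_le hsub ?_ (IS_finite _))
    rw [Set.ncard_smul_set]
    exact Set.ncard_le_ncard (IS_mono_s7 (by omega)) (IS_finite _)
  have hm : IS m ⊆ IS n := IS_mono_s7 hmn
  obtain ⟨p, hp⟩ := exists_ell_eq_mk n
  have hw : FreeGroup.IsReduced w.toWord := FreeGroup.isReduced_toWord
  by_cases hhead : ∃ t, w.toWord = p :: t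
  · right
    obtain ⟨t, ht⟩ := hhead
    have hwt : w = ell n * FreeGroup.mk t := by
      rw [hp, FreeGroup.mul_mk, ← FreeGroup.mk_toWord (x := w), ht]
      rfl
    rw [ht] at hw
    rintro _ ⟨v, hv, rfl⟩
    refine ⟨FreeGroup.mk t * v, ?_, by simp only [hwt, smul_eq_mul, mul_assoc]⟩
    have hmem : w * v ∈ IS (n + 1) := hsub ⟨v, hv, rfl⟩
    rw [hwt, mul_assoc] at hmem
    rcases hmem with hmem | ⟨z, hz, hzeq⟩
    · rw [hp] at hmem
      rcases toWord_letter_mul_s7 p (FreeGroup.mk t * v) with h | h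
      · exact IS_suffix n _ hmem _ (h ▸ List.suffix_cons _ _)
      · rcases head_or_suffix v t (hw.infix (List.suffix_cons p t).isInfix) with
          ⟨q, s, s₁, rfl, hh⟩ | hh
        · exfalso
          -- The word `t` cannot begin with the inverse of `p`, as `p :: t` is reduced.
          rw [hh] at h
          obtain ⟨rfl, -⟩ := List.cons.inj h
          have := (FreeGroup.isReduced_cons_cons.1 hw).1
          simp at this
        · exact hm (IS_suffix m v hv _ hh)
    · exact mul_left_cancel hzeq ▸ hz
  · left
    rintro _ ⟨v, hv, rfl⟩
    have hmem : w * v ∈ IS (n + 1) := hsub ⟨v, hv, rfl⟩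
    change w * v ∈ IS n
    rcases hmem with hmem | ⟨z, hz, hzeq⟩
    · exact hmem
    · simp only [hp, smul_eq_mul] at hzeq
      rcases toWord_letter_mul_s7 p z with h | h
      · have key := head_or_suffix v w.toWord hw
        rw [FreeGroup.mk_toWord] at key
        rcases key with ⟨q, s, s₁, hq, hh⟩ | hh
        · rw [← hzeq, h] at hh
          obtain ⟨rfl, -⟩ := List.cons.inj hh
          exact absurd ⟨s, hq⟩ hhead
        · exact hm (IS_suffix m v hv _ hh)
      · rw [hzeq] at h
        exact IS_suffix n z hz _ (h ▸ List.suffix_cons _ _)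
end
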